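/- arXiv:1104.2806 — 5 statements merged into one kernel-verified Lean document; each statement's English description precedes it below -/
import Mathlib

section
/- Let T be a bounded linear operator on C(K,X). Then T is a multiplication operator (there exists a₀ ∈ C(K) with T(f) = a₀•f for all f ∈ C(K,X)) if and only if both of the following hold: (iia) for every x ∈ X, T maps the cyclic subspace V_x generated by x⃗ into itself; and (iib) for every x ∈ X, every a ∈ C(K) and every g ∈ V_x, T(a•g) = a•T(g). -/
/-- The cyclic subspace of `C(K,X)` generated by the constant function `x⃗`. -/
noncomputable def cyclicC (K : Type*) [TopologicalSpace K] [CompactSpace K]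
    {X : Type*} [NormedAddCommGroup X] [NormedSpace ℝ X] (x : X) : Set C(K, X) :=
  closure {g : C(K, X) | ∃ a : C(K, ℝ), g = a • ContinuousMap.const K x}

theorem approx_simple {K : Type*} [TopologicalSpace K] [CompactSpace K] [T2Space K]
    {X : Type*} [NormedAddCommGroup X] [NormedSpace ℝ X] (f : C(K, X)) (ε : ℝ) (hε : 0 < ε) :
    ∃ (s : Finset K) (ρ : s → C(K, ℝ)),
      dist (∑ i, ρ i • ContinuousMap.const K (f i)) f < ε := by
  obtain ⟨s, hs⟩ := (isCompact_univ (X := K)).elim_finite_subcover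
    (fun k : K => f ⁻¹' Metric.ball (f k) ε)
    (fun k => Metric.isOpen_ball.preimage f.continuous)
    (fun k _ => Set.mem_iUnion.2 ⟨k, by simpa using hε⟩)
  obtain ⟨ρ, hρ⟩ := PartitionOfUnity.exists_isSubordinate (isClosed_univ (X := K))
    (fun k : s => f ⁻¹' Metric.ball (f k) ε)
    (fun k => Metric.isOpen_ball.preimage f.continuous)
    (fun k hk => by
      obtain ⟨i, hi, h⟩ := Set.mem_iUnion₂.1 (hs hk)
      exact Set.mem_iUnion.2 ⟨⟨i, hi⟩, h⟩)
  refine ⟨s, fun i => ρ i, (ContinuousMap.dist_lt_iff hε).2 fun t => ?_⟩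
  have := ρ.finsum_smul_mem_convex (g := fun i _ => f i) (t := Metric.ball (f t) ε)
    (Set.mem_univ t) (fun i hi => by
      have h : t ∈ f ⁻¹' Metric.ball (f i) ε := hρ i (subset_closure hi)
      rw [Metric.mem_ball, dist_comm]
      exact h) (convex_ball _ _)
  rw [finsum_eq_sum_of_fintype, Metric.mem_ball] at this
  simpa [ContinuousMap.sum_apply] using this

/-- A bounded linear operator `T` on `C(K,X)` is a multiplication operator
iff (iia) `T` leaves each cyclic subspace `V_x` invariant, and (iib) `T` commutes with
multiplication by `C(K)` on each `V_x`. -/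
theorem multiplication_iff_invariant_and_commutes (K : Type*) [TopologicalSpace K]
    [CompactSpace K] [T2Space K] (X : Type*) [NormedAddCommGroup X] [NormedSpace ℝ X]
    [CompleteSpace X] (T : C(K, X) →L[ℝ] C(K, X)) :
    (∃ a₀ : C(K, ℝ), ∀ f : C(K, X), T f = a₀ • f) ↔
      ((∀ x : X, Set.MapsTo T (cyclicC K x) (cyclicC K x)) ∧
       (∀ (x : X) (a : C(K, ℝ)) (g : C(K, X)), g ∈ cyclicC K x →
          T (a • g) = a • T g)) := by
  constructor
  · rintro ⟨a₀, h⟩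
    refine ⟨fun x => ?_, fun x a g _ => ?_⟩
    · refine Set.MapsTo.closure ?_ T.continuous
      rintro g ⟨a, rfl⟩
      exact ⟨a₀ * a, by rw [h, mul_smul]⟩
    · rw [h, h, smul_smul, smul_smul, mul_comm]
  · rintro ⟨h1, h2⟩
    have hmem : ∀ x : X, ContinuousMap.const K x ∈ cyclicC K x := fun x =>
      subset_closure ⟨1, by simp⟩
    have hspan : ∀ (x : X) (t : K), ∃ c : ℝ, c • x = T (ContinuousMap.const K x) t := by
      intro x t
      have hcl : IsClosed {g : C(K, X) | g t ∈ (Submodule.span ℝ {x} : Submodule ℝ X)} :=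
        (Submodule.closed_of_finiteDimensional (Submodule.span ℝ {x})).preimage
          (continuous_eval_const t)
      have := closure_minimal (s := {g : C(K, X) | ∃ a : C(K, ℝ),
        g = a • ContinuousMap.const K x}) (by
          rintro g ⟨a, rfl⟩
          exact Submodule.mem_span_singleton.2 ⟨a t, by simp⟩) hcl (h1 x (hmem x))
      exact Submodule.mem_span_singleton.1 this
    have hscal : ∀ t : K, ∃ c : ℝ, ∀ x : X, T (ContinuousMap.const K x) t = c • x := by
      intro t
      let L : X →ₗ[ℝ] X :=
        { toFun := fun x => T (ContinuousMap.const K x) t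
          map_add' := fun x y => by
            have : ContinuousMap.const K (x + y)
              = ContinuousMap.const K x + ContinuousMap.const K y := rfl
            rw [this, map_add]; rfl
          map_smul' := fun c x => by
            have : ContinuousMap.const K (c • x) = c • ContinuousMap.const K x := rfl
            rw [this, map_smul]; rfl }
      obtain ⟨c, hc⟩ := LinearMap.exists_eq_smul_id_of_forall_notLinearIndependent (f := L)
        (fun v hv => by
          obtain ⟨c, hc⟩ := hspan v t
          have := (LinearIndependent.pair_iff.1 hv) c (-1) (by
            change c • v + (-1 : ℝ) • T (ContinuousMap.const K v) t = 0
            rw [hc]; simp)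
          norm_num at this)
      exact ⟨c, fun x => congrArg (fun M : X →ₗ[ℝ] X => M x) hc⟩
    obtain ⟨a₀, ha₀⟩ : ∃ a₀ : C(K, ℝ), ∀ x : X,
        T (ContinuousMap.const K x) = a₀ • ContinuousMap.const K x := by
      by_cases hX : ∃ x : X, x ≠ 0
      · obtain ⟨x₀, hx₀⟩ := hX
        obtain ⟨φ, hφ⟩ := SeparatingDual.exists_eq_one (R := ℝ) hx₀
        refine ⟨⟨fun t => φ (T (ContinuousMap.const K x₀) t), by fun_prop⟩, fun x => ?_⟩
        ext t
        obtain ⟨c, hc⟩ := hscal t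
        simp [hc, hφ]
      · push Not at hX
        exact ⟨0, fun x => by ext t; rw [hX (T _ t), hX ((0 • ContinuousMap.const K x : C(K, X)) t)]⟩
    refine ⟨a₀, fun f => ?_⟩
    have hd : f ∈ closure {g : C(K, X) | T g = a₀ • g} := by
      refine Metric.mem_closure_iff.2 fun ε hε => ?_
      obtain ⟨s, ρ, hρ⟩ := approx_simple f ε hε
      refine ⟨_, ?_, by rwa [dist_comm] at hρ⟩
      simp only [Set.mem_ofPred_eq, map_sum, Finset.smul_sum]
      refine Finset.sum_congr rfl fun i _ => ?_
      rw [h2 _ _ _ (hmem _), ha₀, smul_smul, smul_smul, mul_comm]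
    have hcl : IsClosed {g : C(K, X) | T g = a₀ • g} := by
      have he : {g : C(K, X) | T g = a₀ • g} = ⋂ t : K, {g : C(K, X) | T g t = a₀ t • g t} := by
        ext g
        simp [ContinuousMap.ext_iff]
      rw [he]
      exact isClosed_iInter fun t => isClosed_eq
        ((continuous_eval_const t).comp T.continuous)
        ((continuous_eval_const t).const_smul (a₀ t))
    exact hcl.closure_subset hd
end

section
/- Let p ∈ [1,∞], let f ∈ Lp(μ,X), and let 𝒜 be a (possibly uncountable) family of measurable subsets of Ω such that f = 0 μ-almost everywhere on each A ∈ 𝒜. Let B ⊆ Ω be a measurable set such that every measurable subset of B of positive measure has an intersection of positive measure with some member of 𝒜. Then f = 0 μ-almost everywhere on B. (This expresses that Lp(μ,X) is a Kaplansky L∞(μ)-module: the annihilator of each f in L∞(μ) is a band.) -/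
open MeasureTheory ENNReal

/-- (`Lp(μ,X)` is a Kaplansky `L∞(μ)`-module.)  If `f ∈ Lp(μ,X)` vanishes
a.e. on every member of a family `𝒜` of measurable sets, and `B` is a measurable set
such that every measurable subset of `B` of positive measure meets some member of `𝒜`
in positive measure, then `f` vanishes a.e. on `B`. -/
theorem ae_zero_on_of_family {Ω : Type*} [MeasurableSpace Ω] (μ : Measure Ω)
    [IsProbabilityMeasure μ] [μ.IsComplete]
    (X : Type*) [NormedAddCommGroup X] [NormedSpace ℝ X] [CompleteSpace X]
    (p : ℝ≥0∞) [Fact (1 ≤ p)] (f : Lp X p μ)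
    (𝒜 : Set (Set Ω)) (h𝒜 : ∀ A ∈ 𝒜, MeasurableSet A)
    (hf : ∀ A ∈ 𝒜, ∀ᵐ t ∂μ, t ∈ A → f t = 0)
    (B : Set Ω) (hB : MeasurableSet B)
    (hmeet : ∀ s : Set Ω, MeasurableSet s → s ⊆ B → 0 < μ s → ∃ A ∈ 𝒜, 0 < μ (s ∩ A)) :
    ∀ᵐ t ∂μ, t ∈ B → f t = 0 := by
  have hm : MeasurableSet {t | f t = 0} :=
    (Lp.stronglyMeasurable f).measurableSet_eq_fun stronglyMeasurable_const
  have hs : MeasurableSet (B ∩ {t | f t = 0}ᶜ) := hB.inter hm.compl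
  have h0 : μ (B ∩ {t | f t = 0}ᶜ) = 0 := by
    by_contra hne
    obtain ⟨A, hA, hpos⟩ := hmeet _ hs Set.inter_subset_left (pos_iff_ne_zero.mpr hne)
    refine hpos.ne' (measure_mono_null ?_ (ae_iff.mp (hf A hA)))
    rintro t ⟨⟨_, ht⟩, htA⟩ h
    exact ht (h htA)
  rw [ae_iff]
  refine measure_mono_null ?_ h0
  intro t ht
  have ht' : ¬ (t ∈ B → f t = 0) := ht
  rw [Classical.not_imp] at ht'
  exact ht'
end

section
/- Let T be a bounded linear operator on C(K,X) satisfying the functional equation T((a·⟨f,x*⟩)•x⃗) = (a·⟨T(f),x*⟩)•x⃗ for all a ∈ C(K), f ∈ C(K,X), x ∈ X and x* ∈ X*. Then: (iia) for every x ∈ X, T maps the cyclic subspace V_x into itself; and (iib) for every x ∈ X, every a ∈ C(K) and every g ∈ V_x, T(a•g) = a•T(g). -/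
/-- For `f ∈ C(K,X)` and `x* ∈ X*`, the scalar function `⟨f, x*⟩ : t ↦ x*(f t)` in `C(K)`. -/
noncomputable def pairC {K : Type*} [TopologicalSpace K] {X : Type*} [NormedAddCommGroup X]
    [NormedSpace ℝ X] (f : C(K, X)) (xs : X →L[ℝ] ℝ) : C(K, ℝ) :=
  ⟨fun t => xs (f t), xs.continuous.comp f.continuous⟩

/-- If a bounded linear operator `T` on `C(K,X)` satisfies the functional
equation `T((a·⟨f,x*⟩) • x⃗) = (a·⟨T f, x*⟩) • x⃗`, then (iia) `T` leaves each cyclic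
subspace `V_x` invariant, and (iib) `T` commutes with `C(K)` on each `V_x`. -/
theorem functional_equation_implies_invariant_and_commutes (K : Type*) [TopologicalSpace K]
    [CompactSpace K] [T2Space K] (X : Type*) [NormedAddCommGroup X] [NormedSpace ℝ X]
    [CompleteSpace X] (T : C(K, X) →L[ℝ] C(K, X))
    (hT : ∀ (a : C(K, ℝ)) (f : C(K, X)) (x : X) (xs : X →L[ℝ] ℝ),
      T ((a * pairC f xs) • ContinuousMap.const K x) =
        (a * pairC (T f) xs) • ContinuousMap.const K x) :
    (∀ x : X, Set.MapsTo T (cyclicC K x) (cyclicC K x)) ∧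
    (∀ (x : X) (a : C(K, ℝ)) (g : C(K, X)), g ∈ cyclicC K x → T (a • g) = a • T g) := by
  have key : ∀ x : X, ∃ h : C(K, ℝ), ∀ a : C(K, ℝ),
      T (a • ContinuousMap.const K x) = (a * h) • ContinuousMap.const K x := by
    intro x
    by_cases hx : x = 0
    · refine ⟨0, fun a => ?_⟩
      have h0 : ∀ b : C(K, ℝ), b • ContinuousMap.const K x = 0 := by
        intro b
        ext t
        simp [hx]
      rw [h0, h0, map_zero]
    · obtain ⟨xs, hxs⟩ := SeparatingDual.exists_eq_one (R := ℝ) hx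
      refine ⟨pairC (T (ContinuousMap.const K x)) xs, fun a => ?_⟩
      have h1 : pairC (ContinuousMap.const K x) xs = 1 := by
        ext t
        simp [pairC, hxs]
      have := hT a (ContinuousMap.const K x) x xs
      rwa [h1, mul_one] at this
  have hc : ∀ a : C(K, ℝ), Continuous (fun g : C(K, X) => a • g) := by
    intro a
    refine ContinuousMap.continuous_of_continuous_uncurry _ ?_
    change Continuous fun p : C(K, X) × K => a p.2 • p.1 p.2
    fun_prop
  refine ⟨fun x => ?_, fun x a g hg => ?_⟩
  · obtain ⟨h, hh⟩ := key x
    refine Set.MapsTo.closure ?_ T.continuous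
    rintro _ ⟨a, rfl⟩
    exact ⟨a * h, hh a⟩
  · obtain ⟨h, hh⟩ := key x
    have hcl : IsClosed {g : C(K, X) | T (a • g) = a • T g} :=
      isClosed_eq (T.continuous.comp (hc a)) ((hc a).comp T.continuous)
    refine closure_minimal ?_ hcl hg
    rintro _ ⟨b, rfl⟩
    change T (a • b • ContinuousMap.const K x) = a • T (b • ContinuousMap.const K x)
    rw [smul_smul, hh, hh, smul_smul, mul_assoc]
end

section
/- Let T be a bounded linear operator on C(K,X). Then T is a multiplication operator (there exists a₀ ∈ C(K) with T(f) = a₀•f for all f ∈ C(K,X)) if and only if T satisfies the functional equation T((a·⟨f,x*⟩)•x⃗) = (a·⟨T(f),x*⟩)•x⃗ for all a ∈ C(K), f ∈ C(K,X), x ∈ X and x* ∈ X*. -/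
/-- A bounded linear operator `T` on `C(K,X)` is a multiplication operator
iff it satisfies the functional equation
`T((a·⟨f,x*⟩) • x⃗) = (a·⟨T f, x*⟩) • x⃗` for all `a ∈ C(K)`, `f ∈ C(K,X)`, `x ∈ X`,
`x* ∈ X*`. -/
theorem multiplication_iff_functional_equation (K : Type*) [TopologicalSpace K]
    [CompactSpace K] [T2Space K] (X : Type*) [NormedAddCommGroup X] [NormedSpace ℝ X]
    [CompleteSpace X] (T : C(K, X) →L[ℝ] C(K, X)) :
    (∃ a₀ : C(K, ℝ), ∀ f : C(K, X), T f = a₀ • f) ↔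
      (∀ (a : C(K, ℝ)) (f : C(K, X)) (x : X) (xs : X →L[ℝ] ℝ),
        T ((a * pairC f xs) • ContinuousMap.const K x) =
          (a * pairC (T f) xs) • ContinuousMap.const K x) := by
  constructor
  · rintro ⟨a₀, h⟩ a f x xs
    rw [h, h]
    ext t
    simp only [pairC, ContinuousMap.smul_apply', ContinuousMap.mul_apply, ContinuousMap.coe_mk,
      ContinuousMap.const_apply, map_smul, smul_eq_mul, smul_smul]
    congr 1
    ring
  · intro h
    by_cases hX : ∃ x : X, x ≠ 0
    · obtain ⟨x, hx⟩ := hX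
      obtain ⟨g, hg⟩ := SeparatingDual.exists_eq_one (R := ℝ) hx
      refine ⟨pairC (T (ContinuousMap.const K x)) g, fun f => ?_⟩
      have hone : pairC (ContinuousMap.const K x) g = 1 := by
        ext t
        simpa [pairC] using hg
      ext t
      refine (NormedSpace.eq_iff_forall_dual_eq ℝ).2 fun xs => ?_
      have h1 := h (pairC f xs) (ContinuousMap.const K x) x g
      have h2 := h 1 f x xs
      rw [hone, mul_one] at h1
      rw [one_mul, one_mul, h1] at h2
      have h3 := congrArg (fun F : C(K, X) => F t) h2
      simp only [ContinuousMap.smul_apply', ContinuousMap.mul_apply,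
        ContinuousMap.const_apply] at h3
      have h4 := smul_left_injective ℝ hx h3
      simp only [ContinuousMap.smul_apply', map_smul, smul_eq_mul]
      simp only [pairC, ContinuousMap.coe_mk] at h4 ⊢
      rw [← h4, mul_comm]
    · push Not at hX
      refine ⟨0, fun f => ?_⟩
      ext t
      rw [hX (T f t), hX ((_ : C(K, X)) t)]
end

section
/- Suppose X is infinite-dimensional and there exists a sequence of pairwise disjoint measurable subsets of Ω, each of positive measure. Then there exists f ∈ L∞(μ,X) such that ‖f − g‖_{L∞(μ,X)} ≥ 1/4 for every simple function g (every measurable function with finite range); in particular, the simple functions are not dense in L∞(μ,X). -/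
open MeasureTheory ENNReal

/-- If `X` is infinite dimensional and `Ω` contains a sequence of pairwise
disjoint measurable sets of positive measure, then there is `f ∈ L∞(μ,X)` with
`‖f − g‖ ≥ 1/4` for every (class of a) finitely-valued measurable function `g`; in
particular the simple functions are not dense in `L∞(μ,X)`. -/
theorem simple_functions_not_dense_Linfty {Ω : Type*} [MeasurableSpace Ω] (μ : Measure Ω)
    [IsProbabilityMeasure μ] [μ.IsComplete]
    (X : Type*) [NormedAddCommGroup X] [NormedSpace ℝ X] [CompleteSpace X]
    (hX : ¬ FiniteDimensional ℝ X)
    (A : ℕ → Set Ω) (hmeas : ∀ n, MeasurableSet (A n))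
    (hdisj : Pairwise (Function.onFun Disjoint A)) (hpos : ∀ n, 0 < μ (A n)) :
    ∃ f : Lp X ∞ μ, ∀ g : Lp X ∞ μ,
      (∃ g₀ : Ω → X, (Set.range g₀).Finite ∧ ⇑g =ᵐ[μ] g₀) → (1 : ℝ) / 4 ≤ ‖f - g‖ := by
  obtain ⟨R, x, -, hxR, hx⟩ := exists_seq_norm_le_one_le_norm_sub (𝕜 := ℝ) (E := X) hX
  obtain ⟨N, hN, hNA⟩ := exists_measurable_piecewise A hmeas (fun n (_ : Ω) => n)
    (fun n => measurable_const) (by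
      intro i j hij ω hω
      exact absurd hω.2 (Set.disjoint_left.1 (hdisj hij) hω.1))
  have hsm : StronglyMeasurable (fun ω => x (N ω)) :=
    (StronglyMeasurable.of_discrete (f := x)).comp_measurable hN
  have hmem : MemLp (fun ω => x (N ω)) ∞ μ :=
    memLp_top_of_bound hsm.aestronglyMeasurable R (Filter.Eventually.of_forall fun ω => hxR _)
  refine ⟨hmem.toLp _, ?_⟩
  rintro g ⟨g₀, hfin, hg⟩
  by_contra! hlt
  have hess : ∀ᵐ ω ∂μ, ‖(hmem.toLp _ - g : Lp X ∞ μ) ω‖ ≤ ‖hmem.toLp _ - g‖ := by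
    filter_upwards [enorm_ae_le_eLpNormEssSup (hmem.toLp _ - g : Lp X ∞ μ) μ] with ω h
    rw [Lp.norm_def, ← toReal_enorm, eLpNorm_exponent_top]
    refine ENNReal.toReal_mono ?_ h
    rw [← eLpNorm_exponent_top]
    exact Lp.eLpNorm_ne_top _
  have hae : ∀ᵐ ω ∂μ, ‖x (N ω) - g₀ ω‖ < 1 / 4 := by
    filter_upwards [hg, hmem.coeFn_toLp, Lp.coeFn_sub (hmem.toLp _) g,
      hess] with ω h1 h2 h3 h4
    rw [h3, Pi.sub_apply, h2, h1] at h4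
    exact h4.trans_lt hlt
  have hex : ∀ n, ∃ ω, ‖x n - g₀ ω‖ < 1 / 4 := by
    intro n
    obtain ⟨ω, hω, h⟩ := ((frequently_ae_mem_iff.2 (hpos n).ne').and_eventually hae).exists
    refine ⟨ω, ?_⟩
    have := hNA n hω
    simp only at this
    rwa [this] at h
  choose w hw using hex
  obtain ⟨m, -, n, -, hmn, he⟩ := Set.infinite_univ.exists_ne_map_eq_of_mapsTo
    (f := fun n : ℕ => g₀ (w n)) (t := Set.range g₀) (fun n _ => ⟨w n, rfl⟩) hfin
  have h1 := hx hmn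
  have h2 := hw m
  have h3 := hw n
  rw [he] at h2
  have h4 := norm_sub_le_norm_sub_add_norm_sub (x m) (g₀ (w n)) (x n)
  rw [norm_sub_rev (g₀ (w n))] at h4
  linarith
end
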